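/- For every odd n ≥ 5, W^(1)[g_n] < W^(1)[Maj_n]. -/

import Mathlib

open Finset

namespace BKS

/-- sign function: 1 if z ≥ 0, -1 otherwise. -/
noncomputable def sgn (z : ℝ) : ℝ := if 0 ≤ z then 1 else -1

/-- encode Bool as the ±1 value of a bit. -/
def chi (b : Bool) : ℝ := if b then 1 else -1

/-- Fourier coefficient of f at S. -/
noncomputable def fourierCoeff {n : ℕ} (f : (Fin n → Bool) → ℝ) (S : Finset (Fin n)) : ℝ :=
  (1 / 2 ^ n : ℝ) * ∑ x : Fin n → Bool, f x * ∏ i ∈ S, chi (x i)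

/-- Fourier weight of f at level k: W^(k)[f]. -/
noncomputable def fourierWeight {n : ℕ} (k : ℕ) (f : (Fin n → Bool) → ℝ) : ℝ :=
  ∑ S ∈ Finset.univ.filter (fun S : Finset (Fin n) => S.card = k), (fourierCoeff f S) ^ 2

/-- Noise stability of f at ρ. -/
noncomputable def noiseStab {n : ℕ} (ρ : ℝ) (f : (Fin n → Bool) → ℝ) : ℝ :=
  ∑ k ∈ Finset.range (n + 1), ρ ^ k * fourierWeight k f

/-- Majority function on n bits. -/
noncomputable def Maj (n : ℕ) : (Fin n → Bool) → ℝ := fun x => sgn (∑ i, chi (x i))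

/-- The function g_n(x) = sgn(2(x_1 + ⋯ + x_{n-3}) + x_{n-2} + x_{n-1} + x_n). -/
noncomputable def gfun (n : ℕ) : (Fin n → Bool) → ℝ :=
  fun x => sgn (∑ i : Fin n, (if (i : ℕ) < n - 3 then (2 : ℝ) else 1) * chi (x i))

/-- f is a linear threshold function. -/
def IsLTF {n : ℕ} (f : (Fin n → Bool) → ℝ) : Prop :=
  ∃ (w0 : ℝ) (w : Fin n → ℝ), ∀ x, f x = sgn (w0 + ∑ i, w i * chi (x i))

/-!
Since `x₁ + ⋯ + xₙ₋₃` is even, `gₙ` is the majority of `n - 2` bits in which the last bit has been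
replaced by the majority of three fresh bits. Substituting a balanced function `h` for a bit of `f`
keeps the degree-one coefficients of `f` at the other bits and multiplies the coefficient at the
substituted bit by those of `h`. The degree-one coefficients of `Maj₂ₖ₊₁` all equal
`aₖ = (2k choose k) / 4ᵏ`, so `W⁽¹⁾[g₂ₖ₊₃] = (2k + 3/4) aₖ²` and `W⁽¹⁾[Maj₂ₖ₊₃] = (2k + 3) aₖ₊₁²`,
and the ratio `aₖ₊₁ / aₖ = (2k + 1) / (2k + 2)` turns the difference into the square of
`k aₖ / (2k + 2)`.
-/

section Chi

lemma apply_eq_add_chi_mul (φ : Bool → ℝ) (b : Bool) :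
    φ b = (φ true + φ false) / 2 + chi b * ((φ true - φ false) / 2) := by
  cases b <;> simp only [chi, Bool.false_eq_true, if_true, if_false] <;> ring

lemma chi_true : chi true = 1 := rfl

lemma chi_false : chi false = -1 := rfl

lemma chi_decide (p : Prop) [Decidable p] : chi (decide p) = if p then 1 else -1 := by
  simp only [chi, decide_eq_true_eq]

lemma abs_chi (b : Bool) : |chi b| = 1 := by
  cases b <;> simp [chi]

lemma chi_not (b : Bool) : chi (!b) = -chi b := by
  cases b <;> simp [chi]

variable {ι : Type*} [Fintype ι]

lemma sum_chi_eq_two_mul_card_sub (x : ι → Bool) :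
    ∑ i, chi (x i) = 2 * #{i | x i = true} - Fintype.card ι := by
  have chi_eq (b : Bool) : chi b = 2 * (if b = true then 1 else 0) - 1 := by
    cases b <;> norm_num [chi]
  simp only [chi_eq, sum_sub_distrib, ← mul_sum, sum_boole, sum_const, card_univ, nsmul_eq_mul,
    mul_one]

lemma sum_chi_ne_zero_of_odd_card (hodd : Odd (Fintype.card ι)) (x : ι → Bool) :
    ∑ i, chi (x i) ≠ 0 := by
  rw [sum_chi_eq_two_mul_card_sub, sub_ne_zero]
  have two_mul_ne : 2 * #{i | x i = true} ≠ Fintype.card ι := fun heq =>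
    Nat.not_even_iff_odd.mpr hodd (heq ▸ even_two_mul _)
  exact_mod_cast two_mul_ne

variable [DecidableEq ι]

lemma card_filter_card_true_eq (t : ℕ) :
    #{x : ι → Bool | #{i | x i = true} = t} = (Fintype.card ι).choose t := by
  rw [← card_univ, ← card_powersetCard]
  refine card_bij' (fun x _ => ({i | x i = true} : Finset ι)) (fun S _ i => decide (i ∈ S))
    ?_ ?_ ?_ ?_ <;> simp

lemma sum_prod_chi (S : Finset ι) :
    ∑ x : ι → Bool, ∏ i ∈ S, chi (x i) = if S = ∅ then 2 ^ Fintype.card ι else 0 := by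
  split_ifs with hS
  · simp [hS]
  · obtain ⟨i, hi⟩ := nonempty_iff_ne_empty.mpr hS
    have sum_coord : ∑ b : Bool, (if i ∈ S then chi b else 1) = 0 := by simp [hi, chi]
    calc ∑ x : ι → Bool, ∏ i ∈ S, chi (x i)
        = ∑ x : ι → Bool, ∏ i, if i ∈ S then chi (x i) else 1 := by
          simp only [Fintype.prod_ite_mem]
      _ = ∏ i, ∑ b, if i ∈ S then chi b else 1 :=
          (Fintype.prod_sum fun i b => if i ∈ S then chi b else 1).symm
      _ = 0 := prod_eq_zero (mem_univ i) sum_coord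

end Chi

section FourierCoefficients

lemma fourierWeight_one {n : ℕ} (f : (Fin n → Bool) → ℝ) :
    fourierWeight 1 f = ∑ i, fourierCoeff f {i} ^ 2 := by
  have filter_card : ({S | #S = 1} : Finset (Finset (Fin n))) = powersetCard 1 univ := by
    ext S
    simp [mem_powersetCard]
  rw [fourierWeight, filter_card, powersetCard_one, sum_map]
  rfl

lemma fourierCoeff_eq_zero_of_odd_of_even_card {n : ℕ} {f : (Fin n → Bool) → ℝ}
    (hf : ∀ x, f xᶜ = -f x) {S : Finset (Fin n)} (hS : Even #S) : fourierCoeff f S = 0 := by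
  have prod_compl (x : Fin n → Bool) : ∏ i ∈ S, chi (xᶜ i) = ∏ i ∈ S, chi (x i) := by
    simp only [Pi.compl_apply, Bool.compl_eq_bnot, chi_not, prod_neg, hS.neg_one_pow, one_mul]
  have sum_eq_neg : ∑ x, f x * ∏ i ∈ S, chi (x i) = -∑ x, f x * ∏ i ∈ S, chi (x i) := by
    rw [← sum_neg_distrib, ← Equiv.sum_comp (compl_involutive.toPerm compl)]
    simp only [Function.Involutive.coe_toPerm, hf, prod_compl, neg_mul]
  rw [fourierCoeff, self_eq_neg.mp sum_eq_neg, mul_zero]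

variable {n : ℕ} (f : (Fin (n + 1) → Bool) → ℝ) (i : Fin (n + 1)) (S : Finset (Fin n))

lemma fourierCoeff_map_succAbove :
    fourierCoeff f (S.map i.succAboveEmb) = 1 / 2 ^ (n + 1) *
      ∑ y : Fin n → Bool,
        (f (i.insertNth true y) + f (i.insertNth false y)) * ∏ j ∈ S, chi (y j) := by
  rw [fourierCoeff, ← (Fin.insertNthEquiv (fun _ => Bool) i).sum_comp, Fintype.sum_prod_type]
  simp [Fin.insertNthEquiv, add_mul, sum_add_distrib]

lemma fourierCoeff_insert_map_succAbove :
    fourierCoeff f (insert i (S.map i.succAboveEmb)) = 1 / 2 ^ (n + 1) *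
      ∑ y : Fin n → Bool,
        (f (i.insertNth true y) - f (i.insertNth false y)) * ∏ j ∈ S, chi (y j) := by
  have hi : i ∉ S.map i.succAboveEmb := by simp
  rw [fourierCoeff, ← (Fin.insertNthEquiv (fun _ => Bool) i).sum_comp, Fintype.sum_prod_type]
  simp [Fin.insertNthEquiv, prod_insert hi, chi_true, chi_false, sub_mul, ← sub_eq_add_neg]

end FourierCoefficients

section Substitution

variable {m l : ℕ}

/-- The composition `(y, z) ↦ f (y, h z)`, in which the last bit of the input of `f` is computed by
`h` from `l` fresh bits. -/
def substLast (f : (Fin (m + 1) → Bool) → ℝ) (h : (Fin l → Bool) → Bool) :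
    (Fin (m + l) → Bool) → ℝ :=
  fun x => f (Fin.snoc (fun i => x (Fin.castAdd l i)) (h fun j => x (Fin.natAdd m j)))

variable (f : (Fin (m + 1) → Bool) → ℝ) (h : (Fin l → Bool) → Bool)

lemma sum_apply_mul_prod_chi (φ : Bool → ℝ) (T : Finset (Fin l)) :
    ∑ z, φ (h z) * ∏ j ∈ T, chi (z j) =
      (φ true + φ false) / 2 * (if T = ∅ then 2 ^ l else 0) +
        (φ true - φ false) / 2 * ∑ z, chi (h z) * ∏ j ∈ T, chi (z j) := by
  have sum_chi := sum_prod_chi T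
  rw [Fintype.card_fin] at sum_chi
  rw [← sum_chi, mul_sum, mul_sum, ← sum_add_distrib]
  refine sum_congr rfl fun z _ => ?_
  rw [apply_eq_add_chi_mul φ]
  ring

lemma fourierCoeff_map_castAdd_union_map_natAdd (F : (Fin (m + l) → Bool) → ℝ)
    (S : Finset (Fin m)) (T : Finset (Fin l)) :
    fourierCoeff F (S.map (Fin.castAddEmb l) ∪ T.map (Fin.natAddEmb m)) = 1 / 2 ^ (m + l) *
      ∑ y : Fin m → Bool,
        (∑ z : Fin l → Bool, F (Fin.append y z) * ∏ j ∈ T, chi (z j)) * ∏ i ∈ S, chi (y i) := by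
  have hdisj : Disjoint (S.map (Fin.castAddEmb l)) (T.map (Fin.natAddEmb m)) := by
    simp only [disjoint_left, mem_map, not_exists, not_and]
    rintro _ ⟨i, -, rfl⟩ j - hij
    have hval : m + (j : ℕ) = i := congrArg Fin.val hij
    omega
  rw [fourierCoeff, ← (Fin.appendEquiv m l).sum_comp, Fintype.sum_prod_type]
  simp [Fin.appendEquiv, prod_union hdisj, sum_mul, mul_assoc, mul_comm (Finset.prod S _)]

lemma substLast_append (y : Fin m → Bool) (z : Fin l → Bool) :
    substLast f h (Fin.append y z) = f (Fin.snoc y (h z)) := by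
  simp [substLast]

theorem fourierCoeff_substLast (S : Finset (Fin m)) (T : Finset (Fin l)) :
    fourierCoeff (substLast f h) (S.map (Fin.castAddEmb l) ∪ T.map (Fin.natAddEmb m)) =
      (if T = ∅ then fourierCoeff f (S.map Fin.castSuccEmb) else 0) +
        fourierCoeff f (insert (Fin.last m) (S.map Fin.castSuccEmb)) *
          fourierCoeff (fun z => chi (h z)) T := by
  have coeff_castSucc := fourierCoeff_map_succAbove f (Fin.last m) S
  have coeff_insert_last := fourierCoeff_insert_map_succAbove f (Fin.last m) S
  have succAbove_last : (Fin.last m).succAboveEmb = Fin.castSuccEmb := by ext; simp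
  simp only [succAbove_last, Fin.insertNth_last'] at coeff_castSucc coeff_insert_last
  set χS : (Fin m → Bool) → ℝ := fun y => ∏ i ∈ S, chi (y i)
  set f₁ : (Fin m → Bool) → ℝ := fun y => f (Fin.snoc y true)
  set f₀ : (Fin m → Bool) → ℝ := fun y => f (Fin.snoc y false)
  set sum_χT : ℝ := if T = ∅ then 2 ^ l else 0 with sum_χT_def
  set sum_hχT : ℝ := ∑ z, chi (h z) * ∏ j ∈ T, chi (z j) with sum_hχT_def
  calc fourierCoeff (substLast f h) (S.map (Fin.castAddEmb l) ∪ T.map (Fin.natAddEmb m))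
      = 1 / 2 ^ (m + l) * ∑ y,
          ((f₁ y + f₀ y) / 2 * sum_χT + (f₁ y - f₀ y) / 2 * sum_hχT) * χS y := by
        rw [fourierCoeff_map_castAdd_union_map_natAdd]
        congr! with y
        simp only [substLast_append]
        exact sum_apply_mul_prod_chi h (fun b => f (Fin.snoc y b)) T
    _ = 1 / 2 ^ (m + l) * (sum_χT / 2 * ∑ y, (f₁ y + f₀ y) * χS y +
          sum_hχT / 2 * ∑ y, (f₁ y - f₀ y) * χS y) := by
        congr 1
        rw [mul_sum, mul_sum, ← sum_add_distrib]
        congr! 1 with y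
        ring
    _ = (if T = ∅ then fourierCoeff f (S.map Fin.castSuccEmb) else 0) +
          fourierCoeff f (insert (Fin.last m) (S.map Fin.castSuccEmb)) *
            fourierCoeff (fun z => chi (h z)) T := by
        rw [coeff_castSucc, coeff_insert_last, fourierCoeff, ← sum_hχT_def, sum_χT_def]
        split_ifs <;> field_simp <;> ring

lemma fourierWeight_one_substLast (hbalanced : fourierCoeff (fun z => chi (h z)) ∅ = 0) :
    fourierWeight 1 (substLast f h) =
      ∑ i : Fin m, fourierCoeff f {i.castSucc} ^ 2 +
        fourierCoeff f {Fin.last m} ^ 2 * fourierWeight 1 (fun z => chi (h z)) := by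
  have coeff_castAdd (i : Fin m) :
      fourierCoeff (substLast f h) {Fin.castAdd l i} = fourierCoeff f {i.castSucc} := by
    simpa [hbalanced] using fourierCoeff_substLast f h {i} ∅
  have coeff_natAdd (j : Fin l) : fourierCoeff (substLast f h) {Fin.natAdd m j} =
      fourierCoeff f {Fin.last m} * fourierCoeff (fun z => chi (h z)) {j} := by
    simpa using fourierCoeff_substLast f h ∅ {j}
  simp only [fourierWeight_one, Fin.sum_univ_add, coeff_castAdd, coeff_natAdd, mul_pow, mul_sum]

end Substitution

section Sign

lemma sgn_of_nonneg {z : ℝ} (h : 0 ≤ z) : sgn z = 1 := if_pos h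

lemma sgn_of_neg {z : ℝ} (h : z < 0) : sgn z = -1 := if_neg h.not_ge

lemma sgn_neg {z : ℝ} (hz : z ≠ 0) : sgn (-z) = -sgn z := by
  rcases hz.lt_or_gt with hz | hz
  · rw [sgn_of_nonneg (by linarith), sgn_of_neg hz, neg_neg]
  · rw [sgn_of_neg (by linarith), sgn_of_nonneg hz.le]

lemma abs_sgn (z : ℝ) : |sgn z| = 1 := by
  unfold sgn
  split_ifs <;> simp

lemma sgn_sgn (z : ℝ) : sgn (sgn z) = sgn z := by
  rcases le_or_gt 0 z with hz | hz
  · rw [sgn_of_nonneg hz, sgn_of_nonneg zero_le_one]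
  · rw [sgn_of_neg hz, sgn_of_neg neg_one_lt_zero]

lemma sgn_mul_intCast_add {d u : ℝ} (hu : |u| < d) (a : ℤ) :
    sgn (d * a + u) = if a = 0 then sgn u else sgn a := by
  obtain ⟨hu_lower, hu_upper⟩ := abs_lt.mp hu
  rcases lt_trichotomy a 0 with ha | rfl | ha
  · have ha' : (a : ℝ) ≤ -1 := by exact_mod_cast Int.le_sub_one_of_lt ha
    rw [if_neg ha.ne, sgn_of_neg (by nlinarith), sgn_of_neg (by linarith)]
  · simp
  · have ha' : (1 : ℝ) ≤ a := by exact_mod_cast ha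
    rw [if_neg ha.ne', sgn_of_nonneg (by nlinarith), sgn_of_nonneg (by linarith)]

end Sign

section Majority

/-- The majority function with values in `Bool`, so that it can serve as the input bit of another
function; `chi` turns it into `Maj`. -/
noncomputable def majBit {n : ℕ} (x : Fin n → Bool) : Bool := decide (0 ≤ ∑ i, chi (x i))

lemma chi_majBit {n : ℕ} (x : Fin n → Bool) : chi (majBit x) = Maj n x := by
  rw [majBit, chi_decide, Maj, sgn]

lemma maj_compl {n : ℕ} (hn : Odd n) (x : Fin n → Bool) : Maj n xᶜ = -Maj n x := by
  simp only [Maj, Pi.compl_apply, Bool.compl_eq_bnot, chi_not, sum_neg_distrib]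
  exact sgn_neg (sum_chi_ne_zero_of_odd_card (by simpa using hn) x)

lemma maj_insertNth_sub (k : ℕ) (i : Fin (2 * k + 1)) (y : Fin (2 * k) → Bool) :
    Maj (2 * k + 1) (i.insertNth true y) - Maj (2 * k + 1) (i.insertNth false y) =
      if #{j | y j = true} = k then 2 else 0 := by
  have maj_insertNth (b : Bool) : Maj (2 * k + 1) (i.insertNth b y) =
      sgn (2 * ((#{j | y j = true} - k : ℤ) : ℝ) + chi b) := by
    simp only [Maj, Fin.sum_univ_succAbove _ i, Fin.insertNth_apply_same,
      Fin.insertNth_apply_succAbove, sum_chi_eq_two_mul_card_sub, Fintype.card_fin]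
    push_cast
    ring_nf
  have abs_chi_lt (b : Bool) : |chi b| < 2 := by norm_num [abs_chi]
  simp only [maj_insertNth, sgn_mul_intCast_add (abs_chi_lt _), sub_eq_zero, Nat.cast_inj]
  split_ifs <;> norm_num [chi, sgn]

lemma fourierCoeff_maj_singleton (k : ℕ) (i : Fin (2 * k + 1)) :
    fourierCoeff (Maj (2 * k + 1)) {i} = k.centralBinom / 4 ^ k := by
  calc fourierCoeff (Maj (2 * k + 1)) {i}
      = 1 / 2 ^ (2 * k + 1) * ∑ y : Fin (2 * k) → Bool,
          if #{j | y j = true} = k then 2 else 0 := by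
        simpa [maj_insertNth_sub] using fourierCoeff_insert_map_succAbove (Maj (2 * k + 1)) i ∅
    _ = 1 / 2 ^ (2 * k + 1) * (k.centralBinom * 2) := by
        rw [← sum_filter, sum_const, card_filter_card_true_eq, Fintype.card_fin, nsmul_eq_mul,
          Nat.centralBinom]
    _ = k.centralBinom / 4 ^ k := by
        rw [pow_succ, pow_mul]
        norm_num
        ring

lemma fourierWeight_one_maj (k : ℕ) :
    fourierWeight 1 (Maj (2 * k + 1)) = (2 * k + 1) * (k.centralBinom / 4 ^ k) ^ 2 := by
  simp [fourierWeight_one, fourierCoeff_maj_singleton]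

end Majority

section Comparison

lemma gfun_append (m : ℕ) (y : Fin m → Bool) (z : Fin 3 → Bool) :
    gfun (m + 3) (Fin.append y z) = sgn (2 * ∑ i, chi (y i) + ∑ j, chi (z j)) := by
  simp [gfun, Fin.sum_univ_add, mul_sum]

theorem gfun_eq_substLast_maj (k : ℕ) :
    gfun (2 * k + 3) = substLast (Maj (2 * k + 1)) (majBit (n := 3)) := by
  funext x
  obtain ⟨⟨y, z⟩, rfl⟩ := (Fin.appendEquiv (2 * k) 3).surjective x
  change gfun (2 * k + 3) (Fin.append y z) = substLast _ _ (Fin.append y z)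
  set a : ℤ := #{i | y i = true} - k
  set u : ℝ := ∑ j, chi (z j)
  have sum_y : ∑ i, chi (y i) = 2 * (a : ℝ) := by
    rw [sum_chi_eq_two_mul_card_sub, Fintype.card_fin]
    push_cast [a]
    ring
  have abs_u : |u| < 4 := by
    refine (abs_sum_le_sum_abs _ _).trans_lt ?_
    norm_num [abs_chi]
  calc gfun (2 * k + 3) (Fin.append y z)
      = sgn (4 * a + u) := by rw [gfun_append, sum_y, ← mul_assoc]; norm_num [u]
    _ = sgn (2 * a + sgn u) := by
        rw [sgn_mul_intCast_add abs_u, sgn_mul_intCast_add (by norm_num [abs_sgn]), sgn_sgn]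
    _ = substLast (Maj (2 * k + 1)) majBit (Fin.append y z) := by
        rw [substLast_append, Maj, Fin.sum_univ_castSucc]
        simp only [Fin.snoc_castSucc, Fin.snoc_last, sum_y, chi_majBit]
        rfl

lemma fourierWeight_one_gfun (k : ℕ) :
    fourierWeight 1 (gfun (2 * k + 3)) = (2 * k + 3 / 4) * (k.centralBinom / 4 ^ k) ^ 2 := by
  have maj_three_balanced : fourierCoeff (Maj 3) ∅ = 0 :=
    fourierCoeff_eq_zero_of_odd_of_even_card (maj_compl (by decide)) (by simp)
  have weight_maj_three : fourierWeight 1 (Maj 3) = 3 / 4 := by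
    rw [fourierWeight_one_maj 1]
    norm_num [Nat.centralBinom, Nat.choose]
  rw [gfun_eq_substLast_maj, fourierWeight_one_substLast _ _ (by simpa [chi_majBit])]
  simp only [fourierCoeff_maj_singleton, chi_majBit, weight_maj_three, sum_const, card_univ,
    Fintype.card_fin, nsmul_eq_mul]
  push_cast
  ring

lemma centralBinom_succ_div_four_pow (k : ℕ) :
    ((k + 1).centralBinom / 4 ^ (k + 1) : ℝ) =
      (2 * k + 1) / (2 * k + 2) * (k.centralBinom / 4 ^ k) := by
  have hrec : ((k : ℝ) + 1) * (k + 1).centralBinom = 2 * (2 * k + 1) * k.centralBinom := by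
    exact_mod_cast Nat.succ_mul_centralBinom_succ k
  rw [pow_succ]
  field_simp
  linear_combination 2 * hrec

theorem fourierWeight_one_maj_sub_gfun (k : ℕ) :
    fourierWeight 1 (Maj (2 * k + 3)) - fourierWeight 1 (gfun (2 * k + 3)) =
      (k / (2 * k + 2) * (k.centralBinom / 4 ^ k)) ^ 2 := by
  rw [show 2 * k + 3 = 2 * (k + 1) + 1 by ring, fourierWeight_one_maj,
    centralBinom_succ_div_four_pow, show 2 * (k + 1) + 1 = 2 * k + 3 by ring,
    fourierWeight_one_gfun]
  push_cast
  field_simp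
  ring

end Comparison

theorem stmt6 (n : ℕ) (hn : Odd n) (h5 : 5 ≤ n) :
    fourierWeight 1 (gfun n) < fourierWeight 1 (Maj n) := by
  obtain ⟨k, rfl⟩ : ∃ k, n = 2 * k + 3 := by
    obtain ⟨r, rfl⟩ := hn
    exact ⟨r - 1, by omega⟩
  have hk : 0 < k := by omega
  have hC : 0 < k.centralBinom := k.centralBinom_pos
  rw [← sub_pos, fourierWeight_one_maj_sub_gfun]
  positivity

end BKS
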